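/- arXiv:1409.6413 — 2 statements merged into one kernel-verified Lean document; each statement's English description precedes it below -/
import Mathlib

section
/- For every x > 0, √(2π)·e^{−2x−1}·(x+1)^{(x+1)(x+1/2)}/x^{x(x+1/2)} < Γ(x+1) < e^{−2x}·(x+1)^{(x+1)(x+1/2)}/x^{x(x+1/2)}. -/
open Real

/-!
Let `f x` be the logarithm of the ratio of `Γ(x + 1)` to the lower bound. The functional equation
of `Γ` removes it from `f x - f (x + 1)`, which turns out to be a power series in `(x + 1)⁻¹` with
nonnegative coefficients, hence strictly decreasing in `x`. Stirling's formula gives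
`f (x + n) → 0`. So for `x < y` the sequence `n ↦ f (x + n) - f (y + n)` is strictly decreasing
with limit `0`, whence `f y < f x`: `f` decreases strictly from `f 0 = 1 - log (2π) / 2` to `0`.
-/

open Filter Topology Set

section Monotonicity

theorem lt_of_strictAnti_of_tendsto {β : Type*} [TopologicalSpace β] [Preorder β]
    [OrderClosedTopology β] {u : ℕ → β} {l : β} (hu : StrictAnti u)
    (hlim : Tendsto u atTop (𝓝 l)) (n : ℕ) : l < u n :=
  (hu.antitone.le_of_tendsto hlim (n + 1)).trans_lt (hu n.lt_succ_self)

theorem strictAntiOn_of_strictAntiOn_sub_add {α β : Type*} [AddMonoid α] [Preorder α]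
    [AddRightStrictMono α] [AddCommGroup β] [LinearOrder β] [IsOrderedAddMonoid β]
    [TopologicalSpace β] [OrderTopology β] {f : α → β} {s : Set α} {c : α} {l : β}
    (hs : ∀ x ∈ s, x + c ∈ s) (hsub : StrictAntiOn (fun x ↦ f x - f (x + c)) s)
    (hlim : ∀ x ∈ s, Tendsto (fun n : ℕ ↦ f (x + n • c)) atTop (𝓝 l)) : StrictAntiOn f s := by
  intro x hx y hy hxy
  have hmem (n : ℕ) {z : α} (hz : z ∈ s) : z + n • c ∈ s := by
    induction n with
    | zero => simpa using hz
    | succ n ih => simpa only [succ_nsmul, ← add_assoc] using hs _ ih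
  have hanti : StrictAnti fun n : ℕ ↦ f (x + n • c) - f (y + n • c) := by
    refine strictAnti_nat_of_succ_lt fun n ↦ ?_
    have hstep := hsub (hmem n hx) (hmem n hy) (add_lt_add_left hxy (n • c))
    simp only [add_assoc, ← succ_nsmul] at hstep
    simpa only [sub_lt_sub_iff, add_comm] using hstep
  have hzero : Tendsto (fun n : ℕ ↦ f (x + n • c) - f (y + n • c)) atTop (𝓝 0) := by
    simpa only [sub_self] using (hlim x hx).sub (hlim y hy)
  simpa using lt_of_strictAnti_of_tendsto hanti hzero 0

theorem strictAntiOn_Ici_of_continuousWithinAt {α β : Type*} [LinearOrder α] [DenselyOrdered α]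
    [TopologicalSpace α] [OrderTopology α] [Preorder β] [TopologicalSpace β]
    [OrderClosedTopology β] {f : α → β} {a : α} (hf : StrictAntiOn f (Ioi a))
    (hc : ContinuousWithinAt f (Ioi a) a) : StrictAntiOn f (Ici a) := by
  intro x hx y _ hxy
  rcases (mem_Ici.1 hx).eq_or_lt with rfl | hax
  · obtain ⟨m, ham, hmy⟩ := exists_between hxy
    have : (𝓝[>] a).NeBot := nhdsGT_neBot_of_exists_gt ⟨y, hxy⟩
    have hma : f m ≤ f a := by
      refine ge_of_tendsto hc ?_
      filter_upwards [Ioo_mem_nhdsGT ham] with z hz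
      exact (hf hz.1 ham hz.2).le
    exact (hf ham hxy hmy).trans_le hma
  · exact hf hax (hax.trans hxy) hxy

end Monotonicity

section Logarithm

theorem hasSum_log_one_sub_sq_add_log_sub_log {u : ℝ} (hu : u ≠ 0) (hu1 : |u| < 1) :
    HasSum (fun k : ℕ ↦ k / (2 * (k + 1) * (k + 2) * (2 * k + 3)) * (u ^ 2) ^ (k + 1))
      ((1 / u ^ 2 + 1 / 2) * log (1 - u ^ 2)
        + 3 / (2 * u) * (log (1 + u) - log (1 - u)) - 2) := by
  have hu2 : |u ^ 2| < 1 := by rw [abs_pow]; exact pow_lt_one₀ (abs_nonneg u) hu1 two_ne_zero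
  have hlog := hasSum_pow_div_log_of_abs_lt_one hu2
  have hlog_tail := (hasSum_nat_add_iff' 1).2 (hlog.mul_left (1 / u ^ 2))
  have hdiff_tail := (hasSum_nat_add_iff' 1).2
    ((hasSum_log_sub_log_of_abs_lt_one hu1).mul_left (3 / (2 * u)))
  convert! (hdiff_tail.sub hlog_tail).sub (hlog.mul_left (1 / 2)) using 1
  · ext k
    push_cast
    field_simp
    ring
  · simp only [Finset.sum_range_one]
    push_cast
    field_simp
    ring

theorem log_le_sub_inv_div_two {t : ℝ} (ht : 1 ≤ t) : log t ≤ (t - t⁻¹) / 2 :=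
  (self_le_sinh_iff.2 (log_nonneg ht)).trans_eq (sinh_log (zero_lt_one.trans_le ht))

theorem one_le_add_half_mul_log_one_add_inv {y : ℝ} (hy : 0 < y) :
    1 ≤ (y + 1 / 2) * log (1 + y⁻¹) := by
  calc 1 = (y + 1 / 2) * (2 * y⁻¹ / (y⁻¹ + 2)) := by
        field_simp
        ring
    _ ≤ (y + 1 / 2) * log (1 + y⁻¹) := by
      gcongr
      exact le_log_one_add_of_nonneg (by positivity)

theorem add_half_mul_log_one_add_inv_le {y : ℝ} (hy : 0 < y) :
    (y + 1 / 2) * log (1 + y⁻¹) ≤ 1 + 1 / (4 * y * (y + 1)) := by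
  calc (y + 1 / 2) * log (1 + y⁻¹)
      ≤ (y + 1 / 2) * ((1 + y⁻¹ - (1 + y⁻¹)⁻¹) / 2) := by
        gcongr
        exact log_le_sub_inv_div_two (by simpa using hy.le)
    _ = 1 + 1 / (4 * y * (y + 1)) := by
      field_simp
      ring

theorem tendsto_add_one_mul_add_half_mul_log_one_add_inv_sub_one :
    Tendsto (fun y : ℝ ↦ (y + 1) * ((y + 1 / 2) * log (1 + y⁻¹) - 1)) atTop (𝓝 0) := by
  have hbound : Tendsto (fun y : ℝ ↦ 1 / 4 * y⁻¹) atTop (𝓝 0) := by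
    simpa using tendsto_inv_atTop_zero.const_mul (1 / 4 : ℝ)
  refine squeeze_zero' ?_ ?_ hbound
  · filter_upwards [eventually_gt_atTop 0] with y hy
    exact mul_nonneg (by positivity) (sub_nonneg.2 (one_le_add_half_mul_log_one_add_inv hy))
  · filter_upwards [eventually_gt_atTop 0] with y hy
    calc (y + 1) * ((y + 1 / 2) * log (1 + y⁻¹) - 1)
        ≤ (y + 1) * (1 / (4 * y * (y + 1))) := by
          gcongr
          exact sub_le_iff_le_add'.2 (add_half_mul_log_one_add_inv_le hy)
      _ = 1 / 4 * y⁻¹ := by field_simp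

theorem tendsto_add_mul_log_one_add_div_atTop (a t : ℝ) :
    Tendsto (fun y : ℝ ↦ (y + a) * log (1 + t / y)) atTop (𝓝 t) := by
  have hlog : Tendsto (fun y : ℝ ↦ log (1 + t / y)) atTop (𝓝 0) := by
    simpa using ((tendsto_id.const_div_atTop t).const_add 1).log (by norm_num)
  simpa [add_mul] using (tendsto_mul_log_one_add_div_atTop t).add (hlog.const_mul a)

end Logarithm

section Stirling

theorem log_Gamma_add_one {x : ℝ} (hx : 0 < x) : log (Gamma (x + 1)) = log x + log (Gamma x) := by
  rw [Gamma_add_one hx.ne', log_mul hx.ne' (Gamma_pos_of_pos hx).ne']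

theorem tendsto_log_factorial_sub_stirling :
    Tendsto (fun n : ℕ ↦ log n.factorial - ((n + 1 / 2) * log n - n)) atTop
      (𝓝 (log (2 * π) / 2)) := by
  have hconst : log √π + log 2 / 2 = log (2 * π) / 2 := by
    rw [log_sqrt pi_pos.le, log_mul two_ne_zero pi_ne_zero]
    ring
  rw [← hconst]
  refine ((Stirling.tendsto_stirlingSeq_sqrt_pi.log (by positivity)).add_const _).congr' ?_
  filter_upwards [eventually_ne_atTop 0] with n hn
  have hn' : (n : ℝ) ≠ 0 := Nat.cast_ne_zero.2 hn
  rw [Stirling.log_stirlingSeq_formula, log_mul two_ne_zero hn', log_div hn' (exp_ne_zero 1),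
    log_exp]
  ring

theorem tendsto_log_Gamma_sub_log_factorial {x : ℝ} (hx : 0 < x) :
    Tendsto (fun n : ℕ ↦ log (Gamma (x + n + 1)) - x * log n - log n.factorial) atTop (𝓝 0) := by
  have h := (BohrMollerup.tendsto_log_gamma hx).const_sub (log (Gamma x))
  rw [sub_self] at h
  refine h.congr fun n ↦ ?_
  have hrec := BohrMollerup.f_add_nat_eq (f := log ∘ Gamma)
    (fun hy ↦ (log_Gamma_add_one hy).trans (add_comm _ _)) hx (n + 1)
  simp only [Function.comp_apply, Nat.cast_add_one, ← add_assoc] at hrec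
  rw [hrec, BohrMollerup.logGammaSeq]
  ring

theorem tendsto_log_Gamma_sub_stirling {x : ℝ} (hx : 0 < x) :
    Tendsto (fun n : ℕ ↦ log (Gamma (x + n + 1)) - ((x + n + 1 / 2) * log (x + n) - (x + n))) atTop
      (𝓝 (log (2 * π) / 2)) := by
  have hshift := ((tendsto_add_mul_log_one_add_div_atTop (x + 1 / 2) x).comp
    tendsto_natCast_atTop_atTop).const_sub x
  have h := ((tendsto_log_Gamma_sub_log_factorial hx).add
    tendsto_log_factorial_sub_stirling).add hshift
  rw [zero_add, sub_self, add_zero] at h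
  refine h.congr' ?_
  filter_upwards [eventually_gt_atTop 0] with n hn
  have hn' : (0 : ℝ) < n := Nat.cast_pos.2 hn
  have hlog : log (1 + x / n) = log (x + n) - log n := by
    rw [← log_div (by positivity) hn'.ne', add_div, div_self hn'.ne', add_comm]
  simp only [Function.comp_apply, hlog]
  ring

end Stirling

/-- The function `f₂` of the paper: the logarithm of the ratio of `Γ(x + 1)` to
`√(2π) * exp (-2x - 1) * (x + 1) ^ ((x + 1) * (x + 1/2)) / x ^ (x * (x + 1/2))`, written so that it
is continuous at `x = 0`. -/
noncomputable def logGammaError (x : ℝ) : ℝ :=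
  log (Gamma (x + 1)) - log (2 * π) / 2 - (x + 1 / 2) * ((x + 1) * log (x + 1) - x * log x)
    + 2 * x + 1

namespace logGammaError

theorem apply_zero : logGammaError 0 = 1 - log (2 * π) / 2 := by
  simp only [logGammaError, zero_add, Gamma_one, log_one, mul_zero, sub_zero, zero_mul, add_zero]
  ring

theorem continuousAt_zero : ContinuousAt logGammaError 0 := by
  have hGamma : ContinuousAt (fun x : ℝ ↦ log (Gamma (x + 1))) 0 := by
    have : ContinuousAt Gamma (0 + 1) :=
      (differentiableOn_Gamma_Ioi.differentiableAt (Ioi_mem_nhds (by norm_num))).continuousAt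
    exact (this.comp (f := fun x : ℝ ↦ x + 1) (by fun_prop)).log (by simp)
  have hlog : ContinuousAt (fun x : ℝ ↦ log (x + 1)) 0 := ContinuousAt.log (by fun_prop) (by simp)
  have hmul_log : ContinuousAt (fun x : ℝ ↦ x * log x) 0 := continuous_mul_log.continuousAt
  unfold logGammaError
  fun_prop

theorem sub_add_one {x : ℝ} (hx : 0 < x) :
    logGammaError x - logGammaError (x + 1) =
      (1 / (x + 1)⁻¹ ^ 2 + 1 / 2) * log (1 - (x + 1)⁻¹ ^ 2)
        + 3 / (2 * (x + 1)⁻¹) * (log (1 + (x + 1)⁻¹) - log (1 - (x + 1)⁻¹)) - 2 := by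
  have hadd : log (1 + (x + 1)⁻¹) = log (x + 2) - log (x + 1) := by
    rw [← log_div (by positivity) (by positivity)]
    congr 1
    field_simp
    ring
  have hsub : log (1 - (x + 1)⁻¹) = log x - log (x + 1) := by
    rw [← log_div (by positivity) (by positivity)]
    congr 1
    field_simp
    ring
  have hsq : log (1 - (x + 1)⁻¹ ^ 2) = log (x + 2) + log x - 2 * log (x + 1) := by
    have hinv : (x + 1)⁻¹ < 1 := inv_lt_one_of_one_lt₀ (by linarith)
    rw [show 1 - (x + 1)⁻¹ ^ 2 = (1 + (x + 1)⁻¹) * (1 - (x + 1)⁻¹) by ring,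
      log_mul (by positivity) (sub_pos.2 hinv).ne', hadd, hsub]
    ring
  rw [hadd, hsub, hsq]
  unfold logGammaError
  rw [log_Gamma_add_one (by positivity : 0 < x + 1), show x + 1 + 1 = x + 2 by ring]
  field_simp
  ring

theorem hasSum_sub_add_one {x : ℝ} (hx : 0 < x) :
    HasSum (fun k : ℕ ↦ k / (2 * (k + 1) * (k + 2) * (2 * k + 3)) * ((x + 1)⁻¹ ^ 2) ^ (k + 1))
      (logGammaError x - logGammaError (x + 1)) := by
  rw [sub_add_one hx]
  refine hasSum_log_one_sub_sq_add_log_sub_log (by positivity) ?_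
  rw [abs_of_pos (by positivity)]
  exact inv_lt_one_of_one_lt₀ (by linarith)

theorem strictAntiOn_sub_add_one :
    StrictAntiOn (fun x ↦ logGammaError x - logGammaError (x + 1)) (Ioi 0) := by
  intro x hx y hy hxy
  rw [mem_Ioi] at hx hy
  -- The coefficient with index `0` vanishes, so strictness comes from index `1`.
  refine hasSum_lt (i := 1) (fun k ↦ ?_) ?_ (hasSum_sub_add_one hy) (hasSum_sub_add_one hx)
  · gcongr
  · gcongr

theorem tendsto_add_natCast {x : ℝ} (hx : 0 < x) :
    Tendsto (fun n : ℕ ↦ logGammaError (x + n)) atTop (𝓝 0) := by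
  have hstirling := (tendsto_log_Gamma_sub_stirling hx).sub_const (log (2 * π) / 2)
  have hrest := tendsto_add_one_mul_add_half_mul_log_one_add_inv_sub_one.comp
    (tendsto_atTop_add_const_left _ x tendsto_natCast_atTop_atTop)
  have h := hstirling.sub hrest
  rw [sub_self, sub_self] at h
  refine h.congr fun n ↦ ?_
  have hy : 0 < x + n := by positivity
  have hlog : log (1 + (x + n)⁻¹) = log (x + n + 1) - log (x + n) := by
    rw [← log_div (by positivity) hy.ne', add_div, div_self hy.ne', one_div]
  simp only [Function.comp_apply, hlog, logGammaError]
  ring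

theorem strictAntiOn_Ici : StrictAntiOn logGammaError (Ici 0) := by
  refine strictAntiOn_Ici_of_continuousWithinAt ?_ continuousAt_zero.continuousWithinAt
  refine strictAntiOn_of_strictAntiOn_sub_add (l := 0) (fun x hx ↦ ?_) strictAntiOn_sub_add_one
    fun x hx ↦ ?_
  · exact add_pos (mem_Ioi.1 hx) one_pos
  · simpa only [nsmul_one] using tendsto_add_natCast hx

theorem lt_one_sub_log_two_pi_div_two {x : ℝ} (hx : 0 < x) :
    logGammaError x < 1 - log (2 * π) / 2 :=
  apply_zero ▸ strictAntiOn_Ici self_mem_Ici hx.le hx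

theorem pos {x : ℝ} (hx : 0 < x) : 0 < logGammaError x := by
  have hanti : StrictAnti fun n : ℕ ↦ logGammaError (x + n) := fun m n hmn ↦
    strictAntiOn_Ici (mem_Ici.2 (by positivity)) (mem_Ici.2 (by positivity)) (by gcongr)
  simpa using lt_of_strictAnti_of_tendsto hanti (tendsto_add_natCast hx) 0

end logGammaError

theorem log_mul_rpow_div_rpow {c a b : ℝ} (hc : c ≠ 0) (ha : 0 < a) (hb : 0 < b) (p q : ℝ) :
    log (c * a ^ p / b ^ q) = log c + p * log a - q * log b := by
  rw [log_div (mul_ne_zero hc (by positivity)) (by positivity), log_mul hc (by positivity),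
    log_rpow ha, log_rpow hb]

theorem gamma_double_ineq (x : ℝ) (hx : 0 < x) :
    Real.sqrt (2 * π) * Real.exp (-2 * x - 1)
        * (x + 1) ^ ((x + 1) * (x + 1 / 2)) / x ^ (x * (x + 1 / 2))
      < Real.Gamma (x + 1) ∧
    Real.Gamma (x + 1)
      < Real.exp (-2 * x) * (x + 1) ^ ((x + 1) * (x + 1 / 2)) / x ^ (x * (x + 1 / 2)) := by
  have hx1 : 0 < x + 1 := by positivity
  have hGamma : 0 < Gamma (x + 1) := Gamma_pos_of_pos hx1
  have hlower := logGammaError.pos hx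
  have hupper := logGammaError.lt_one_sub_log_two_pi_div_two hx
  unfold logGammaError at hlower hupper
  constructor
  · rw [← log_lt_log_iff (by positivity) hGamma, log_mul_rpow_div_rpow (by positivity) hx1 hx,
      log_mul (by positivity) (exp_ne_zero _), log_sqrt (by positivity), log_exp]
    linarith
  · rw [← log_lt_log_iff hGamma (by positivity), log_mul_rpow_div_rpow (exp_ne_zero _) hx1 hx,
      log_exp]
    linarith
end

section
/- For every x > 0, √(2π)·((x+1/2)/e · (x²+x+23/80)/(x²+x+79/240))^{x+1/2} > Γ(x+1) > √(158e/69)·((x+1/2)/e · (x²+x+23/80)/(x²+x+79/240))^{x+1/2}, and the constants √(158e/69) and √(2π) are best possible. -/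
open Real

/-!
Put `y = x + 1/2` and let `g y = log Γ(y + 1/2) - (y log y - y + y log ((y² + p) / (y² + q)))`, so
that `exp (g y)` is the ratio of `Γ(x + 1)` to the approximation when `p = 3/80` and `q = 19/240`.
For all `p` and `q`, Stirling's formula gives `g (y + n) → log √(2π)`. The functional equation of
`Γ` turns `g (y + 1) - g y` into an elementary function whose second derivative is rational. For the
two given constants this second derivative is positive; since the first derivative vanishes at
infinity, `g (y + 1) - g y` is strictly decreasing. Then for `y < z` the sequence
`g (z + n) - g (y + n)` is strictly decreasing with limit `0`, so its initial term `g z - g y` is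
positive, that is, `g` is strictly increasing.
-/

open Filter Topology Set
open scoped Nat

lemma hasDerivAt_fwdDiff {𝕜 E : Type*} [NontriviallyNormedField 𝕜] [NormedAddCommGroup E]
    [NormedSpace 𝕜 E] {f f' : 𝕜 → E} {h x : 𝕜} (hx : HasDerivAt f (f' x) x)
    (hxh : HasDerivAt f (f' (x + h)) (x + h)) :
    HasDerivAt (fwdDiff h f) (fwdDiff h f' x) x :=
  (hxh.comp_add_const x h).sub hx

lemma lt_of_strictMonoOn_of_tendsto_add_nat {α : Type*} [TopologicalSpace α] [Preorder α]
    [OrderClosedTopology α] {f : ℝ → α} {L : α} {a x : ℝ} (hf : StrictMonoOn f (Ioi a)) (hx : a < x)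
    (hL : Tendsto (fun n : ℕ => f (x + n)) atTop (𝓝 L)) : f x < L := by
  have hmono : StrictMono fun n : ℕ => f (x + n) := fun m n hmn =>
    hf (lt_add_of_lt_of_nonneg hx m.cast_nonneg) (lt_add_of_lt_of_nonneg hx n.cast_nonneg)
      (by gcongr)
  calc f x = f (x + (0 : ℕ)) := by simp
    _ < f (x + (1 : ℕ)) := hmono one_pos
    _ ≤ L := hmono.monotone.ge_of_tendsto hL 1

section Monotonicity

variable {f f' f'' : ℝ → ℝ} {a : ℝ}

lemma strictMonoOn_of_strictAntiOn_fwdDiff (hf : StrictAntiOn (fwdDiff 1 f) (Ioi a)) {L : ℝ}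
    (hL : ∀ x, a < x → Tendsto (fun n : ℕ => f (x + n)) atTop (𝓝 L)) :
    StrictMonoOn f (Ioi a) := by
  intro x hx y hy hxy
  have hanti : StrictAnti fun n : ℕ => f (y + n) - f (x + n) := by
    refine strictAnti_nat_of_succ_lt fun n => ?_
    have hdiff : fwdDiff 1 f (y + n) < fwdDiff 1 f (x + n) :=
      hf (lt_add_of_lt_of_nonneg hx n.cast_nonneg : a < x + n)
        (lt_add_of_lt_of_nonneg hy n.cast_nonneg : a < y + n) (by gcongr)
    simp only [fwdDiff, add_assoc] at hdiff
    push_cast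
    linarith
  have hlim : Tendsto (fun n : ℕ => f (y + n) - f (x + n)) atTop (𝓝 0) := by
    simpa using (hL y hy).sub (hL x hx)
  refine sub_pos.mp ?_
  calc 0 ≤ f (y + (1 : ℕ)) - f (x + (1 : ℕ)) := hanti.antitone.le_of_tendsto hlim 1
    _ < f (y + (0 : ℕ)) - f (x + (0 : ℕ)) := hanti one_pos
    _ = f y - f x := by simp

lemma strictAntiOn_of_deriv2_pos_of_tendsto_deriv_zero
    (hf : ∀ x, a < x → HasDerivAt f (f' x) x) (hf' : ∀ x, a < x → HasDerivAt f' (f'' x) x)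
    (hpos : ∀ x, a < x → 0 < f'' x) (hlim : Tendsto f' atTop (𝓝 0)) :
    StrictAntiOn f (Ioi a) := by
  have hmono : StrictMonoOn f' (Ioi a) := by
    refine strictMonoOn_of_deriv_pos (convex_Ioi a)
      (fun x hx => (hf' x hx).continuousAt.continuousWithinAt) fun x hx => ?_
    rw [interior_Ioi] at hx
    exact (hf' x hx).deriv ▸ hpos x hx
  have hneg : ∀ x, a < x → f' x < 0 := fun x hx =>
    lt_of_strictMonoOn_of_tendsto_add_nat hmono hx
      (hlim.comp (tendsto_atTop_add_const_left _ x tendsto_natCast_atTop_atTop))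
  refine strictAntiOn_of_deriv_neg (convex_Ioi a)
    (fun x hx => (hf x hx).continuousAt.continuousWithinAt) fun x hx => ?_
  rw [interior_Ioi] at hx
  exact (hf x hx).deriv ▸ hneg x hx

end Monotonicity

section Stirling

lemma tendsto_log_Gamma_add_nat_sub {z : ℝ} (hz : 0 < z) :
    Tendsto (fun n : ℕ => log (Gamma (z + (n + 1))) - (z * log n + log n !)) atTop (𝓝 0) := by
  have hfeq {y : ℝ} (hy : 0 < y) : (log ∘ Gamma) (y + 1) = (log ∘ Gamma) y + log y := by
    rw [Function.comp_apply, Gamma_add_one hy.ne', log_mul hy.ne' (Gamma_pos_of_pos hy).ne',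
      add_comm, Function.comp_apply]
  have hlim := (BohrMollerup.tendsto_log_gamma hz).const_sub (log (Gamma z))
  rw [sub_self] at hlim
  refine hlim.congr fun n => ?_
  have hshift := BohrMollerup.f_add_nat_eq hfeq hz (n + 1)
  simp only [Function.comp_apply, Nat.cast_add_one] at hshift
  rw [hshift, BohrMollerup.logGammaSeq]
  ring

lemma tendsto_log_factorial_sub :
    Tendsto (fun n : ℕ => log n ! - ((n + 1 / 2) * log n - n)) atTop (𝓝 (log √(2 * π))) := by
  have hconst : log √π + log 2 / 2 = log √(2 * π) := by
    rw [log_sqrt pi_pos.le, log_sqrt (by positivity), log_mul two_ne_zero pi_ne_zero]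
    ring
  rw [← hconst]
  refine ((Stirling.tendsto_stirlingSeq_sqrt_pi.log (by positivity)).add_const _).congr' ?_
  filter_upwards [eventually_ne_atTop 0] with n hn
  have hn' : (n : ℝ) ≠ 0 := Nat.cast_ne_zero.mpr hn
  rw [Stirling.log_stirlingSeq_formula, log_mul two_ne_zero hn', log_div hn' (exp_ne_zero 1),
    log_exp]
  ring

lemma tendsto_mul_log_add_sub_log (c : ℝ) :
    Tendsto (fun x : ℝ => x * (log (x + c) - log x)) atTop (𝓝 c) := by
  refine (tendsto_mul_log_one_add_div_atTop c).congr' ?_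
  filter_upwards [eventually_gt_atTop 0, eventually_gt_atTop (-c)] with x hx hxc
  rw [one_add_div hx.ne', log_div (by linarith) hx.ne']

lemma tendsto_add_mul_log_add_sub_log (c : ℝ) :
    Tendsto (fun x : ℝ => (x + c) * (log (x + c) - log x)) atTop (𝓝 c) := by
  simpa only [add_mul, mul_zero, add_zero] using
    (tendsto_mul_log_add_sub_log c).add ((tendsto_log_comp_add_sub_log c).const_mul c)

lemma tendsto_log_Gamma_add_half_sub {y : ℝ} (hy : -1 / 2 < y) :
    Tendsto (fun n : ℕ => log (Gamma (y + n + 1 / 2)) - ((y + n) * log (y + n) - (y + n)))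
      atTop (𝓝 (log √(2 * π))) := by
  rw [← tendsto_add_atTop_iff_nat 1]
  have hlim := (((tendsto_log_Gamma_add_nat_sub (z := y + 1 / 2) (by linarith)).add
    tendsto_log_factorial_sub).sub
      ((tendsto_add_mul_log_add_sub_log (y + 1)).comp tendsto_natCast_atTop_atTop)).add_const
        (y + 1)
  rw [zero_add, sub_add_cancel] at hlim
  refine hlim.congr fun n => ?_
  have harg : y + 1 / 2 + ((n : ℝ) + 1) = y + (n + 1) + 1 / 2 := by ring
  have hbase : (n : ℝ) + (y + 1) = y + (n + 1) := by ring
  simp only [Function.comp_apply, harg, hbase, Nat.cast_add_one]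
  ring

end Stirling

/-- For `y > 0` and `p, q ≥ 0`, the logarithm of `(y / e * ((y² + p) / (y² + q))) ^ y`, which is
Burnside's approximation `(y / e) ^ y` to `Γ(y + 1/2) / √(2π)` with a rational correction. -/
noncomputable def logBurnside (p q y : ℝ) : ℝ :=
  y * log y - y + y * (log (y ^ 2 + p) - log (y ^ 2 + q))

/-- The derivative of `logBurnside p q`. -/
noncomputable def logBurnsideDeriv (p q y : ℝ) : ℝ :=
  log y + (log (y ^ 2 + p) - log (y ^ 2 + q)) + (2 * q / (y ^ 2 + q) - 2 * p / (y ^ 2 + p))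

/-- The second derivative of `logBurnside p q`. -/
noncomputable def logBurnsideDeriv₂ (p q y : ℝ) : ℝ :=
  y⁻¹ + (2 * y * (y ^ 2 + 3 * p) / (y ^ 2 + p) ^ 2 - 2 * y * (y ^ 2 + 3 * q) / (y ^ 2 + q) ^ 2)

/-- The logarithm of the ratio of `Γ(y + 1/2)` to its corrected Burnside approximation; the factor
`√(2π)` is left out of the approximation, so the limit at infinity is `log √(2π)`. -/
noncomputable def logGammaRatio (p q y : ℝ) : ℝ :=
  log (Gamma (y + 1 / 2)) - logBurnside p q y

section LogGammaRatio

variable {p q y : ℝ}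

lemma hasDerivAt_log_sq_add (hp : y ^ 2 + p ≠ 0) :
    HasDerivAt (fun t : ℝ => log (t ^ 2 + p)) (2 * y / (y ^ 2 + p)) y := by
  simpa using ((hasDerivAt_pow 2 y).add_const p).log hp

lemma hasDerivAt_const_div_sq_add (c : ℝ) (hp : y ^ 2 + p ≠ 0) :
    HasDerivAt (fun t : ℝ => c / (t ^ 2 + p)) (-(c * (2 * y)) / (y ^ 2 + p) ^ 2) y := by
  simpa using (hasDerivAt_const y c).fun_div ((hasDerivAt_pow 2 y).add_const p) hp

lemma hasDerivAt_logBurnside (hy : y ≠ 0) (hp : y ^ 2 + p ≠ 0) (hq : y ^ 2 + q ≠ 0) :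
    HasDerivAt (logBurnside p q) (logBurnsideDeriv p q y) y := by
  have h := ((hasDerivAt_mul_log hy).sub (hasDerivAt_id y)).add
    ((hasDerivAt_id y).mul ((hasDerivAt_log_sq_add hp).fun_sub (hasDerivAt_log_sq_add hq)))
  refine h.congr_deriv ?_
  simp only [id, logBurnsideDeriv]
  field_simp
  ring

lemma hasDerivAt_logBurnsideDeriv (hy : y ≠ 0) (hp : y ^ 2 + p ≠ 0) (hq : y ^ 2 + q ≠ 0) :
    HasDerivAt (logBurnsideDeriv p q) (logBurnsideDeriv₂ p q y) y := by
  have h := ((hasDerivAt_log hy).add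
    ((hasDerivAt_log_sq_add hp).sub (hasDerivAt_log_sq_add hq))).add
      ((hasDerivAt_const_div_sq_add (2 * q) hq).sub (hasDerivAt_const_div_sq_add (2 * p) hp))
  refine h.congr_deriv ?_
  simp only [logBurnsideDeriv₂]
  field_simp
  ring

lemma tendsto_sq_add_atTop (p : ℝ) : Tendsto (fun t : ℝ => t ^ 2 + p) atTop atTop :=
  tendsto_atTop_add_const_right _ _ (tendsto_pow_atTop two_ne_zero)

lemma tendsto_log_sq_add_sub_log_sq_add (p q : ℝ) :
    Tendsto (fun t : ℝ => log (t ^ 2 + p) - log (t ^ 2 + q)) atTop (𝓝 0) := by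
  simpa [Function.comp_def] using
    ((tendsto_log_comp_add_sub_log p).sub (tendsto_log_comp_add_sub_log q)).comp
      (tendsto_pow_atTop two_ne_zero)

lemma tendsto_mul_log_sq_add_sub_log_sq_add (p q : ℝ) :
    Tendsto (fun t : ℝ => t * (log (t ^ 2 + p) - log (t ^ 2 + q))) atTop (𝓝 0) := by
  have hlim := tendsto_inv_atTop_zero.mul
    (((tendsto_mul_log_add_sub_log p).sub (tendsto_mul_log_add_sub_log q)).comp
      (tendsto_pow_atTop two_ne_zero))
  rw [zero_mul] at hlim
  refine hlim.congr' ?_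
  filter_upwards [eventually_ne_atTop 0] with t ht
  simp only [Function.comp_apply]
  field_simp
  ring

lemma tendsto_logBurnsideDeriv_sub_log (p q : ℝ) :
    Tendsto (fun t => logBurnsideDeriv p q t - log t) atTop (𝓝 0) := by
  have hlim := (tendsto_log_sq_add_sub_log_sq_add p q).add
    (((tendsto_sq_add_atTop q).const_div_atTop (2 * q)).sub
      ((tendsto_sq_add_atTop p).const_div_atTop (2 * p)))
  simp only [sub_zero, add_zero] at hlim
  refine hlim.congr fun t => ?_
  rw [logBurnsideDeriv]
  ring

lemma tendsto_fwdDiff_logBurnsideDeriv (p q : ℝ) :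
    Tendsto (fwdDiff 1 (logBurnsideDeriv p q)) atTop (𝓝 0) := by
  have hlim := tendsto_logBurnsideDeriv_sub_log p q
  have hshift := hlim.comp (tendsto_atTop_add_const_right _ 1 tendsto_id)
  have hdiff := (hshift.sub hlim).add (tendsto_log_comp_add_sub_log 1)
  simp only [sub_zero, add_zero] at hdiff
  refine hdiff.congr fun t => ?_
  simp only [Function.comp_apply, id, fwdDiff]
  ring

lemma tendsto_logGammaRatio_add_nat (p q : ℝ) (hy : -1 / 2 < y) :
    Tendsto (fun n : ℕ => logGammaRatio p q (y + n)) atTop (𝓝 (log √(2 * π))) := by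
  have hlim := (tendsto_log_Gamma_add_half_sub hy).sub
    ((tendsto_mul_log_sq_add_sub_log_sq_add p q).comp
      (tendsto_atTop_add_const_left _ y tendsto_natCast_atTop_atTop))
  rw [sub_zero] at hlim
  refine hlim.congr fun n => ?_
  simp only [Function.comp_apply, logGammaRatio, logBurnside]
  ring

lemma fwdDiff_logGammaRatio (hy : -1 / 2 < y) :
    fwdDiff 1 (logGammaRatio p q) y = log (y + 1 / 2) - fwdDiff 1 (logBurnside p q) y := by
  have hpos : 0 < y + 1 / 2 := by linarith
  have hGamma : log (Gamma (y + 1 + 1 / 2)) = log (y + 1 / 2) + log (Gamma (y + 1 / 2)) := by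
    rw [add_right_comm, Gamma_add_one hpos.ne', log_mul hpos.ne' (Gamma_pos_of_pos hpos).ne']
  simp only [fwdDiff, logGammaRatio, hGamma]
  ring

-- Cleared of denominators, right side minus left side is a polynomial in `y` with positive
-- coefficients.
lemma fwdDiff_logBurnsideDeriv₂_lt (hy : 0 < y) :
    fwdDiff 1 (logBurnsideDeriv₂ (3 / 80) (19 / 240)) y < -1 / (y + 1 / 2) ^ 2 := by
  simp only [fwdDiff, logBurnsideDeriv₂]
  field_simp
  rw [← sub_pos]
  ring_nf
  positivity

lemma strictAntiOn_fwdDiff_logGammaRatio :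
    StrictAntiOn (fwdDiff 1 (logGammaRatio (3 / 80) (19 / 240))) (Ioi 0) := by
  have hlog : ∀ y : ℝ, 0 < y → HasDerivAt (fun t => log (t + 1 / 2)) (y + 1 / 2)⁻¹ y :=
    fun y hy => (((hasDerivAt_id y).add_const (1 / 2)).log (ne_of_gt (by positivity))).congr_deriv
      (one_div _)
  have hinv : ∀ y : ℝ, 0 < y → HasDerivAt (fun t => (t + 1 / 2)⁻¹) (-1 / (y + 1 / 2) ^ 2) y :=
    fun y hy => ((hasDerivAt_id y).add_const (1 / 2)).fun_inv (ne_of_gt (by positivity))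
  have hlim : Tendsto (fun t : ℝ => (t + 1 / 2)⁻¹) atTop (𝓝 0) :=
    (tendsto_atTop_add_const_right _ _ tendsto_id).inv_tendsto_atTop
  have hderiv : ∀ y : ℝ, 0 < y →
      HasDerivAt (logBurnside (3 / 80) (19 / 240)) (logBurnsideDeriv (3 / 80) (19 / 240) y) y :=
    fun y hy => hasDerivAt_logBurnside hy.ne' (by positivity) (by positivity)
  have hderiv₂ : ∀ y : ℝ, 0 < y →
      HasDerivAt (logBurnsideDeriv (3 / 80) (19 / 240))
        (logBurnsideDeriv₂ (3 / 80) (19 / 240) y) y :=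
    fun y hy => hasDerivAt_logBurnsideDeriv hy.ne' (by positivity) (by positivity)
  have hanti : StrictAntiOn
      (fun y => log (y + 1 / 2) - fwdDiff 1 (logBurnside (3 / 80) (19 / 240)) y) (Ioi 0) :=
    strictAntiOn_of_deriv2_pos_of_tendsto_deriv_zero
      (fun y hy => (hlog y hy).fun_sub
        (hasDerivAt_fwdDiff (hderiv y hy) (hderiv (y + 1) (by positivity))))
      (fun y hy => (hinv y hy).fun_sub
        (hasDerivAt_fwdDiff (hderiv₂ y hy) (hderiv₂ (y + 1) (by positivity))))
      (fun y hy => sub_pos.mpr (fwdDiff_logBurnsideDeriv₂_lt hy))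
      (by simpa using hlim.sub (tendsto_fwdDiff_logBurnsideDeriv (3 / 80) (19 / 240)))
  exact hanti.congr fun y hy => (fwdDiff_logGammaRatio (by linarith [mem_Ioi.mp hy])).symm

lemma strictMonoOn_logGammaRatio : StrictMonoOn (logGammaRatio (3 / 80) (19 / 240)) (Ioi 0) :=
  strictMonoOn_of_strictAntiOn_fwdDiff strictAntiOn_fwdDiff_logGammaRatio fun _ hy =>
    tendsto_logGammaRatio_add_nat _ _ (by linarith)

end LogGammaRatio

/-- The approximation to `Γ(x + 1) / √(2π)`: the corrected Burnside approximation at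
`y = x + 1/2` with `p = 3/80` and `q = 19/240`, for which `y² + p = x² + x + 23/80` and
`y² + q = x² + x + 79/240`. These are the solutions of `p - q = -1/24` and `q² - p² = 7/1440`, which
match the terms `-1/(24y)` and `7/(2880y³)` of Stirling's series for `log Γ(y + 1/2)`. -/
noncomputable def gammaApprox (x : ℝ) : ℝ :=
  ((x + 1 / 2) / Real.exp 1 * ((x ^ 2 + x + 23 / 80) / (x ^ 2 + x + 79 / 240))) ^ (x + 1 / 2)

/-- The ratio of `Γ(x + 1)` to its approximation. Its infimum and supremum over an
interval are the best constants in the two-sided estimate of `Γ(x + 1)` there. -/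
noncomputable def gammaRatio (x : ℝ) : ℝ :=
  Gamma (x + 1) / gammaApprox x

section GammaRatio

variable {x : ℝ}

lemma gammaApprox_eq_exp (hx : -1 / 2 < x) :
    gammaApprox x = exp (logBurnside (3 / 80) (19 / 240) (x + 1 / 2)) := by
  have hy : 0 < x + 1 / 2 := by linarith
  have hp : x ^ 2 + x + 23 / 80 = (x + 1 / 2) ^ 2 + 3 / 80 := by ring
  have hq : x ^ 2 + x + 79 / 240 = (x + 1 / 2) ^ 2 + 19 / 240 := by ring
  rw [gammaApprox, hp, hq, rpow_def_of_pos (by positivity),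
    log_mul (by positivity) (by positivity), log_div (by positivity) (by positivity),
    log_div (by positivity) (by positivity), log_exp, logBurnside]
  congr 1
  ring

lemma gammaApprox_pos (hx : -1 / 2 < x) : 0 < gammaApprox x :=
  gammaApprox_eq_exp hx ▸ exp_pos _

lemma gammaRatio_eq_exp (hx : -1 / 2 < x) :
    gammaRatio x = exp (logGammaRatio (3 / 80) (19 / 240) (x + 1 / 2)) := by
  rw [gammaRatio, gammaApprox_eq_exp hx, logGammaRatio, exp_sub, add_assoc, add_halves,
    exp_log (Gamma_pos_of_pos (by linarith))]

lemma strictMonoOn_gammaRatio : StrictMonoOn gammaRatio (Ioi (-1 / 2)) := by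
  intro x hx z hz hxz
  rw [mem_Ioi] at hx hz
  rw [gammaRatio_eq_exp hx, gammaRatio_eq_exp hz, exp_lt_exp]
  exact strictMonoOn_logGammaRatio (mem_Ioi.mpr (by linarith)) (mem_Ioi.mpr (by linarith))
    (by linarith)

lemma tendsto_gammaRatio_add_nat (hx : -1 / 2 < x) :
    Tendsto (fun n : ℕ => gammaRatio (x + n)) atTop (𝓝 √(2 * π)) := by
  have hlim := (tendsto_logGammaRatio_add_nat (3 / 80) (19 / 240)
    (y := x + 1 / 2) (by linarith)).rexp
  rw [exp_log (by positivity)] at hlim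
  refine hlim.congr fun n => ?_
  rw [gammaRatio_eq_exp (lt_add_of_lt_of_nonneg hx n.cast_nonneg), add_right_comm]

lemma continuousAt_gammaRatio (hx : -1 / 2 < x) : ContinuousAt gammaRatio x := by
  have hGamma : ContinuousAt (fun t => Gamma (t + 1)) x :=
    ContinuousAt.comp (f := fun t => t + 1)
      (differentiableOn_Gamma_Ioi.differentiableAt
        (Ioi_mem_nhds (by linarith))).continuousAt (by fun_prop)
  have hden : x ^ 2 + x + 79 / 240 ≠ 0 := by nlinarith [sq_nonneg (x + 1 / 2)]
  have hApprox : ContinuousAt gammaApprox x := by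
    refine ContinuousAt.rpow ?_ (by fun_prop) (Or.inr (by linarith))
    fun_prop (disch := assumption)
  exact hGamma.div hApprox (gammaApprox_pos hx).ne'

lemma gammaRatio_zero : gammaRatio 0 = √(158 * Real.exp 1 / 69) := by
  have hApprox : gammaApprox 0 = (√(158 * Real.exp 1 / 69))⁻¹ := by
    rw [gammaApprox, ← sqrt_inv, zero_add, ← sqrt_eq_rpow]
    congr 1
    field_simp
    norm_num
  rw [gammaRatio, hApprox, zero_add, Gamma_one, one_div, inv_inv]

end GammaRatio

theorem gamma_double_ineq_best_general {a : ℝ} (ha : -1 / 2 < a) :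
    (∀ x : ℝ, a < x →
      gammaRatio a * gammaApprox x < Gamma (x + 1) ∧
      Gamma (x + 1) < √(2 * π) * gammaApprox x) ∧
    (∀ c : ℝ, (∀ x : ℝ, a < x → c * gammaApprox x ≤ Gamma (x + 1)) → c ≤ gammaRatio a) ∧
    (∀ c : ℝ, (∀ x : ℝ, a < x → Gamma (x + 1) ≤ c * gammaApprox x) → √(2 * π) ≤ c) := by
  have hpos : ∀ x, a < x → 0 < gammaApprox x := fun x hx => gammaApprox_pos (ha.trans hx)
  refine ⟨fun x hx => ⟨?_, ?_⟩, fun c hc => ?_, fun c hc => ?_⟩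
  · exact (lt_div_iff₀ (hpos x hx)).mp (strictMonoOn_gammaRatio ha (ha.trans hx) hx)
  · have hlt : gammaRatio x < √(2 * π) := lt_of_strictMonoOn_of_tendsto_add_nat
      strictMonoOn_gammaRatio (ha.trans hx) (tendsto_gammaRatio_add_nat (ha.trans hx))
    exact (div_lt_iff₀ (hpos x hx)).mp hlt
  · have hlim : Tendsto gammaRatio (𝓝[>] a) (𝓝 (gammaRatio a)) :=
      (continuousAt_gammaRatio ha).continuousWithinAt
    refine ge_of_tendsto hlim (eventually_mem_nhdsWithin.mono fun x (hx : a < x) => ?_)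
    exact (le_div_iff₀ (hpos x hx)).mpr (hc x hx)
  · refine le_of_tendsto' (tendsto_gammaRatio_add_nat (x := a + 1) (by linarith)) fun n => ?_
    have hn : a < a + 1 + n := by linarith [n.cast_nonneg (α := ℝ)]
    exact (div_le_iff₀ (hpos _ hn)).mpr (hc _ hn)

theorem gamma_double_ineq_best :
    (∀ x : ℝ, 0 < x →
      Real.sqrt (158 * Real.exp 1 / 69)
          * ((x + 1 / 2) / Real.exp 1 * ((x ^ 2 + x + 23 / 80) / (x ^ 2 + x + 79 / 240)))
            ^ (x + 1 / 2)
        < Real.Gamma (x + 1) ∧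
      Real.Gamma (x + 1)
        < Real.sqrt (2 * π)
          * ((x + 1 / 2) / Real.exp 1 * ((x ^ 2 + x + 23 / 80) / (x ^ 2 + x + 79 / 240)))
            ^ (x + 1 / 2)) ∧
    (∀ c : ℝ, (∀ x : ℝ, 0 < x →
        c * ((x + 1 / 2) / Real.exp 1 * ((x ^ 2 + x + 23 / 80) / (x ^ 2 + x + 79 / 240)))
            ^ (x + 1 / 2) ≤ Real.Gamma (x + 1)) →
      c ≤ Real.sqrt (158 * Real.exp 1 / 69)) ∧
    (∀ c : ℝ, (∀ x : ℝ, 0 < x →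
        Real.Gamma (x + 1)
          ≤ c * ((x + 1 / 2) / Real.exp 1 * ((x ^ 2 + x + 23 / 80) / (x ^ 2 + x + 79 / 240)))
            ^ (x + 1 / 2)) →
      Real.sqrt (2 * π) ≤ c) := by
  rw [← gammaRatio_zero]
  exact gamma_double_ineq_best_general (by norm_num)
end
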